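/- Let n ≥ 3 be a natural number and let U ⊆ (ℝ/ℤ)^n be a 2-dimensional proper subtorus. Then the relative spectrum 𝒮₁(U) is a finite set if and only if the set Z(U) := { x ∈ U : max_{1≤i≤n} dist_{ℝ/ℤ}(x_i, 1/2) = D(U) } contains two non-parallel nondegenerate line segments, i.e., there exist x, x' ∈ (ℝ/ℤ)^n and nonzero vectors w, w' ∈ ℝ^n that are not scalar multiples of one another such that { x + t·w (mod ℤ^n) : t ∈ [0,1] } ⊆ Z(U) and { x' + t·w' (mod ℤ^n) : t ∈ [0,1] } ⊆ Z(U). -/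

import Mathlib

noncomputable section

abbrev Torus (n : ℕ) : Type := Fin n → AddCircle (1 : ℝ)

def torusProj {n : ℕ} (x : Fin n → ℝ) : Torus n := fun i => (x i : AddCircle (1 : ℝ))

def spanTorus {n k : ℕ} (v : Fin k → Fin n → ℤ) : Set (Torus n) :=
  {p | ∃ t : Fin k → ℝ, p = torusProj fun i => ∑ j, t j * (v j i : ℝ)}

def IsSubtorus {n : ℕ} (k : ℕ) (S : Set (Torus n)) : Prop :=
  ∃ v : Fin k → Fin n → ℤ,
    LinearIndependent ℝ (fun j : Fin k => fun i : Fin n => (v j i : ℝ)) ∧ S = spanTorus v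

def IsProperSub {n : ℕ} (S : Set (Torus n)) : Prop :=
  ¬ S ⊆ ⋃ i : Fin n, {x : Torus n | x i = 0}

def DVal {n : ℕ} (S : Set (Torus n)) : ℝ :=
  sInf ((fun x : Torus n => ⨆ i, dist (x i) ((1 / 2 : ℝ) : AddCircle (1 : ℝ))) '' S)

def relSpec1 {n : ℕ} (U : Set (Torus n)) : Set ℝ :=
  {d | ∃ T : Set (Torus n), IsSubtorus 1 T ∧ IsProperSub T ∧ T ⊆ U ∧ d = DVal T}

def Spec (k n : ℕ) : Set ℝ :=
  {d | ∃ T : Set (Torus n), IsSubtorus k T ∧ IsProperSub T ∧ d = DVal T}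

def progSet (d : ℝ) (α β : ℚ) : Set ℝ :=
  {x | ∃ s : ℕ, x = d + 1 / ((α : ℝ) * s + (β : ℝ))}

/-- The locus where `U` achieves its `D`-value. -/
def ZSet {n : ℕ} (U : Set (Torus n)) : Set (Torus n) :=
  {x ∈ U | (⨆ i, dist (x i) ((1 / 2 : ℝ) : AddCircle (1 : ℝ))) = DVal U}

/-!
The locus `Z(U)` is a finite union of projections of convex subsets of `ℝⁿ`, the parts of the real
plane over `U` closest to the lifts of the centre. Hence a coordinate taking infinitely many values
on `Z(U)` is nonconstant along some segment in `Z(U)`.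

Suppose `𝒮₁(U)` is finite. Given a coordinate `i`, choose `p` and `q` spanning `U` and another
coordinate `j` with `p i = q j = 0` and `p j = -q i ≠ 0`. The lines of direction `q + s p` become
dense in `U`, so their `D`-values tend to `D(U)` and by finiteness equal `D(U)` for large `s`; such
a line, on which `z j = -s z i`, meets `Z(U)`. If `z i` took only finitely many values on `Z(U)`,
simultaneous recurrence would make all their multiples by some large `s` nearly `0`, whereas points
of `Z(U)` keep `z j` away from `0`. So every coordinate varies along some segment in `Z(U)`. By
minimality of `D(U)` no segment in `Z(U)` can vary in all coordinates, and the segment obtained for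
a coordinate fixed by the first one is not parallel to it.

Conversely, in an integral parametrisation of `U`, a line of coprime direction `q` meets every
segment of direction `c` with `|det(q, c)| ≥ 1`, so if the segment lies in `Z(U)` the line has
`D`-value `D(U)`. For two independent directions `c₁, c₂` only finitely many `q` satisfy neither
`|det(q, c₁)| ≥ 1` nor `|det(q, c₂)| ≥ 1`.
-/

open Filter Metric Topology

variable {n k : ℕ}

/-! ### Distance to the centre of the torus -/

lemma dist_half_eq (x : AddCircle (1 : ℝ)) :
    dist x ((1 / 2 : ℝ) : AddCircle (1 : ℝ)) = 1 / 2 - ‖x‖ := by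
  obtain ⟨t, ht, rfl⟩ : ∃ t : ℝ, |t| ≤ 1 / 2 ∧ (t : AddCircle (1 : ℝ)) = x := by
    induction x using QuotientAddGroup.induction_on with
    | H y => exact ⟨y - round y, abs_sub_round y, by simp⟩
  have norm_coe {s : ℝ} (hs : |s| ≤ 1 / 2) : ‖(s : AddCircle (1 : ℝ))‖ = |s| :=
    (AddCircle.norm_coe_eq_abs_iff 1 one_ne_zero).2 (by simpa using hs)
  rw [dist_eq_norm, ← AddCircle.coe_sub, norm_coe ht]
  rcases abs_le.1 ht with ⟨hl, hu⟩
  rcases le_total 0 t with h | h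
  · rw [norm_coe (by rw [abs_le]; constructor <;> linarith), abs_of_nonneg h,
      abs_of_nonpos (by linarith)]
    ring
  · rw [show t - 1 / 2 = t + 1 / 2 - 1 by ring, AddCircle.coe_sub, AddCircle.coe_period, sub_zero,
      norm_coe (by rw [abs_le]; constructor <;> linarith), abs_of_nonpos h,
      abs_of_nonneg (by linarith)]
    ring

lemma dist_coe_le_iff {x y r : ℝ} :
    dist (x : AddCircle (1 : ℝ)) (y : AddCircle (1 : ℝ)) ≤ r ↔ ∃ m : ℤ, dist x (y + m) ≤ r := by
  rw [dist_eq_norm, ← AddCircle.coe_sub, UnitAddCircle.norm_eq]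
  simp only [Real.dist_eq, ← sub_sub]
  exact ⟨fun h => ⟨_, h⟩, fun ⟨m, h⟩ => (round_le _ m).trans h⟩

lemma dist_torusProj_le_iff {x y : Fin n → ℝ} {r : ℝ} (hr : 0 ≤ r) :
    dist (torusProj x) (torusProj y) ≤ r ↔ ∃ m : Fin n → ℤ, dist x (fun i => y i + m i) ≤ r := by
  simp only [dist_pi_le_iff hr, torusProj, dist_coe_le_iff, Classical.skolem]

lemma dist_torusProj_le (x y : Fin n → ℝ) : dist (torusProj x) (torusProj y) ≤ dist x y :=
  (dist_torusProj_le_iff dist_nonneg).2 ⟨0, by simp⟩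

/-- The point `(1/2, …, 1/2)`, from which `DVal` measures the sup distance. -/
def center (n : ℕ) : Torus n := torusProj fun _ => 1 / 2

lemma iSup_dist_half_eq (x : Torus n) :
    (⨆ i, dist (x i) ((1 / 2 : ℝ) : AddCircle (1 : ℝ))) = dist (center n) x := by
  rw [dist_comm]
  refine le_antisymm (Real.iSup_le (fun i => dist_le_pi_dist x (center n) i) dist_nonneg) ?_
  rw [dist_pi_le_iff (Real.iSup_nonneg fun i => dist_nonneg)]
  exact fun i => le_ciSup
    (f := fun i => dist (x i) ((1 / 2 : ℝ) : AddCircle (1 : ℝ))) (Set.finite_range _).bddAbove i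

lemma DVal_eq_infDist (S : Set (Torus n)) : DVal S = infDist (center n) S := by
  simp only [DVal, iSup_dist_half_eq, infDist_eq_iInf, sInf_image']

lemma mem_ZSet_iff {U : Set (Torus n)} {x : Torus n} :
    x ∈ ZSet U ↔ x ∈ U ∧ dist (center n) x ≤ DVal U := by
  simp only [ZSet, Set.mem_ofPred_eq, iSup_dist_half_eq]
  refine and_congr_right fun hx => ⟨le_of_eq, fun h => h.antisymm ?_⟩
  exact (DVal_eq_infDist U).trans_le (infDist_le_dist_of_mem hx)

lemma isProperSub_iff_DVal_lt {S : Set (Torus n)} (hS : S.Nonempty) :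
    IsProperSub S ↔ DVal S < 1 / 2 := by
  rw [DVal_eq_infDist, infDist_lt_iff hS, IsProperSub, Set.not_subset]
  refine exists_congr fun x => and_congr_right fun _ => ?_
  rw [dist_comm, dist_pi_lt_iff (by norm_num)]
  have coord (i : Fin n) : dist (x i) (center n i) = 1 / 2 - ‖x i‖ := dist_half_eq (x i)
  simp [coord]

lemma DVal_eq_of_inter_ZSet_nonempty {T U : Set (Torus n)} (hTU : T ⊆ U)
    (h : (ZSet U ∩ T).Nonempty) : DVal T = DVal U := by
  obtain ⟨x, hxZ, hxT⟩ := h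
  refine le_antisymm ?_ ?_
  · rw [DVal_eq_infDist]
    exact (infDist_le_dist_of_mem hxT).trans (mem_ZSet_iff.1 hxZ).2
  · simpa only [DVal_eq_infDist] using infDist_le_infDist_of_subset hTU ⟨x, hxT⟩

/-! ### Lifting subtori to real subspaces -/

lemma torusProj_add (x y : Fin n → ℝ) : torusProj (x + y) = torusProj x + torusProj y := rfl

lemma torusProj_eq_iff {x y : Fin n → ℝ} :
    torusProj x = torusProj y ↔ ∃ m : Fin n → ℤ, x = y + fun i => (m i : ℝ) := by
  rw [← dist_le_zero, dist_torusProj_le_iff le_rfl]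
  simp only [dist_le_zero]
  rfl

lemma continuous_torusProj : Continuous (torusProj : (Fin n → ℝ) → Torus n) :=
  continuous_pi fun i => (AddCircle.continuous_mk' 1).comp (continuous_apply i)

/-- The linear map `t ↦ ∑ j, t j • v j` attached to integer vectors `v j`; its range is the real
subspace lying over `spanTorus v`. -/
def spanParam (v : Fin k → Fin n → ℤ) : (Fin k → ℝ) →ₗ[ℝ] (Fin n → ℝ) :=
  Fintype.linearCombination ℝ fun j i => (v j i : ℝ)

lemma spanParam_apply (v : Fin k → Fin n → ℤ) (t : Fin k → ℝ) (i : Fin n) :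
    spanParam v t i = ∑ j, t j * (v j i : ℝ) := by
  simp [spanParam, Fintype.linearCombination_apply]

lemma spanTorus_eq_range (v : Fin k → Fin n → ℤ) :
    spanTorus v = Set.range fun t => torusProj (spanParam v t) := by
  ext p
  simp only [spanTorus, Set.mem_ofPred_eq, Set.mem_range, eq_comm (a := p), ← spanParam_apply]

lemma spanTorus_eq_image (v : Fin k → Fin n → ℤ) :
    spanTorus v = torusProj '' (spanParam v).range := by
  rw [spanTorus_eq_range, LinearMap.coe_range, ← Set.range_comp]
  rfl

lemma zero_mem_spanTorus (v : Fin k → Fin n → ℤ) : (0 : Torus n) ∈ spanTorus v := by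
  rw [spanTorus_eq_image]
  exact ⟨0, Submodule.zero_mem _, rfl⟩

lemma spanParam_intCast (v : Fin k → Fin n → ℤ) (q : Fin k → ℤ) :
    spanParam v (fun j => (q j : ℝ)) = fun i => (((∑ j, q j • v j) i : ℤ) : ℝ) := by
  ext i
  simp [spanParam_apply]

lemma torusProj_spanParam_add_intCast (v : Fin k → Fin n → ℤ) (a : Fin k → ℝ) (m : Fin k → ℤ) :
    torusProj (spanParam v (a + fun j => (m j : ℝ))) = torusProj (spanParam v a) := by
  rw [map_add, spanParam_intCast]
  exact torusProj_eq_iff.2 ⟨_, rfl⟩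

lemma spanTorus_eq_image_Icc (v : Fin k → Fin n → ℤ) :
    spanTorus v = torusProj '' (spanParam v '' Set.Icc 0 1) := by
  rw [spanTorus_eq_range, ← Set.image_univ, Set.image_image]
  refine subset_antisymm ?_ (Set.image_mono (Set.subset_univ _))
  rintro _ ⟨t, -, rfl⟩
  refine ⟨fun j => Int.fract (t j), ⟨fun j => Int.fract_nonneg _,
    fun j => (Int.fract_lt_one _).le⟩, ?_⟩
  have ht : t = (fun j => Int.fract (t j)) + fun j => ((⌊t j⌋ : ℤ) : ℝ) :=
    funext fun j => (Int.fract_add_floor (t j)).symm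
  conv_rhs => rw [ht]
  exact (torusProj_spanParam_add_intCast v _ _).symm

lemma isCompact_spanParam_image_Icc (v : Fin k → Fin n → ℤ) :
    IsCompact (spanParam v '' Set.Icc 0 1) :=
  isCompact_Icc.image (spanParam v).continuous_of_finiteDimensional

lemma isCompact_spanTorus (v : Fin k → Fin n → ℤ) : IsCompact (spanTorus v) := by
  rw [spanTorus_eq_image_Icc]
  exact (isCompact_spanParam_image_Icc v).image continuous_torusProj

lemma exists_dist_center_eq_DVal (v : Fin k → Fin n → ℤ) :
    ∃ x ∈ spanTorus v, dist (center n) x = DVal (spanTorus v) := by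
  rw [DVal_eq_infDist]
  simpa only [eq_comm] using
    (isCompact_spanTorus v).exists_infDist_eq_dist ⟨0, zero_mem_spanTorus v⟩ (center n)

lemma column_ne_zero_of_isProperSub {v : Fin k → Fin n → ℤ} (h : IsProperSub (spanTorus v))
    (i : Fin n) : (fun j => v j i) ≠ 0 := by
  intro hi
  refine h ?_
  rintro _ ⟨t, rfl⟩
  have hvi (j : Fin k) : v j i = 0 := congrFun hi j
  exact Set.mem_iUnion.2 ⟨i, by simp [torusProj, hvi]⟩

/-! ### Segments -/

/-- The projection to the torus of a segment starting over `x` with direction vector `w`. -/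
def torusSegment (x : Torus n) (w : Fin n → ℝ) : Set (Torus n) :=
  {p | ∃ t ∈ Set.Icc (0 : ℝ) 1, p = x + torusProj fun i => t * w i}

lemma left_mem_torusSegment (x : Torus n) (w : Fin n → ℝ) : x ∈ torusSegment x w :=
  ⟨0, ⟨le_rfl, zero_le_one⟩, by simp [torusProj, funext_iff]⟩

-- Uncountably many points of the segment lift into `W` modulo the countable lattice `ℤⁿ`, so two
-- of them differ by the same lattice vector, and their difference is a multiple of `w`.
lemma mem_of_torusSegment_subset (W : Submodule ℝ (Fin n → ℝ)) {x : Torus n} {w : Fin n → ℝ}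
    (h : torusSegment x w ⊆ torusProj '' (W : Set (Fin n → ℝ))) : w ∈ W := by
  obtain ⟨a, -, rfl⟩ := h (left_mem_torusSegment x w)
  have lift (t : Set.Icc (0 : ℝ) 1) :
      ∃ m : Fin n → ℤ, (a + (t : ℝ) • w + fun i => (m i : ℝ)) ∈ W := by
    obtain ⟨y, hyW, hy⟩ := h ⟨t, t.2, rfl⟩
    obtain ⟨m, hm⟩ := torusProj_eq_iff.1 (hy.trans (torusProj_add a ((t : ℝ) • w)).symm)
    exact ⟨m, hm ▸ hyW⟩
  choose m hm using lift
  have not_injective : ¬ Function.Injective m := fun hinj =>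
    absurd (Set.countable_coe_iff.1 hinj.countable) (by simp [Cardinal.Real.Icc_countable_iff])
  obtain ⟨s, t, hst, hne⟩ : ∃ s t, m s = m t ∧ s ≠ t := by
    simpa only [Function.Injective, not_forall, exists_prop] using not_injective
  have hdiff : ((s : ℝ) - t) • w ∈ W := by
    convert W.sub_mem (hm s) (hm t) using 1
    rw [hst]
    module
  exact (W.smul_mem_iff (sub_ne_zero.2 (Subtype.coe_injective.ne hne))).1 hdiff

/-! ### One-dimensional subtori -/

/-- The image in the torus of the real line through the integer vector `u`. -/
def lineTorus (u : Fin n → ℤ) : Set (Torus n) := spanTorus fun _ : Fin 1 => u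

lemma mem_lineTorus_iff {u : Fin n → ℤ} {p : Torus n} :
    p ∈ lineTorus u ↔ ∃ t : ℝ, p = torusProj (t • fun i => (u i : ℝ)) :=
  ⟨fun ⟨t, ht⟩ => ⟨t 0, by simpa [Pi.smul_def] using ht⟩,
    fun ⟨t, ht⟩ => ⟨fun _ => t, by simpa [Pi.smul_def] using ht⟩⟩

lemma lineTorus_nonempty (u : Fin n → ℤ) : (lineTorus u).Nonempty := ⟨0, zero_mem_spanTorus _⟩

lemma isSubtorus_one_iff {T : Set (Torus n)} : IsSubtorus 1 T ↔ ∃ u ≠ 0, T = lineTorus u := by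
  have key (v : Fin 1 → Fin n → ℤ) :
      LinearIndependent ℝ (fun j i => (v j i : ℝ)) ↔ v 0 ≠ 0 := by
    simp [funext_iff]
  constructor
  · rintro ⟨v, hv, rfl⟩
    exact ⟨v 0, (key v).1 hv, congrArg spanTorus (funext fun j => by rw [Subsingleton.elim j 0])⟩
  · rintro ⟨u, hu, rfl⟩
    exact ⟨_, (key fun _ => u).2 hu, rfl⟩

lemma lineTorus_subset_of_smul_eq {d g : ℤ} (hd : d ≠ 0) {u w : Fin n → ℤ}
    (h : d • u = g • w) : lineTorus u ⊆ lineTorus w := by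
  intro p hp
  obtain ⟨t, rfl⟩ := mem_lineTorus_iff.1 hp
  refine mem_lineTorus_iff.2 ⟨t * g / d, congrArg torusProj (funext fun i => ?_)⟩
  have hd' : (d : ℝ) ≠ 0 := Int.cast_ne_zero.2 hd
  have hi : (d : ℝ) * u i = g * w i := by exact_mod_cast congrFun h i
  simp only [Pi.smul_apply, smul_eq_mul]
  field_simp
  linear_combination t * hi

lemma lineTorus_eq_of_smul_eq {d g : ℤ} (hd : d ≠ 0) (hg : g ≠ 0) {u w : Fin n → ℤ}
    (h : d • u = g • w) : lineTorus u = lineTorus w :=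
  (lineTorus_subset_of_smul_eq hd h).antisymm (lineTorus_subset_of_smul_eq hg h.symm)

lemma mem_lineTorus_sum_smul_iff {v : Fin k → Fin n → ℤ} {q : Fin k → ℤ} {p : Torus n} :
    p ∈ lineTorus (∑ j, q j • v j) ↔
      ∃ t : ℝ, p = torusProj (spanParam v (t • fun j => (q j : ℝ))) := by
  simp only [mem_lineTorus_iff, map_smul, spanParam_intCast]

lemma mem_range_spanParam_of_lineTorus_subset {v : Fin k → Fin n → ℤ} {u : Fin n → ℤ}
    (h : lineTorus u ⊆ spanTorus v) : (fun i => (u i : ℝ)) ∈ (spanParam v).range := by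
  refine mem_of_torusSegment_subset _ (x := 0) ?_
  rw [← spanTorus_eq_image]
  rintro _ ⟨t, -, rfl⟩
  exact h (mem_lineTorus_iff.2 ⟨t, zero_add _⟩)

/-! ### Integer bases of planes -/

/-- The `2 × 2` determinant with rows `a` and `b`. It serves both as the area form on the parameter
plane of `spanParam v` and, applied to columns of `v`, as the Plücker coordinates of `v`. -/
def wedge {R : Type*} [CommRing R] (a b : Fin 2 → R) : R := a 0 * b 1 - a 1 * b 0

lemma exists_wedge_column_ne_zero {v : Fin 2 → Fin n → ℤ}
    (hv : LinearIndependent ℝ fun j i => (v j i : ℝ)) {i : Fin n} (hi : (fun r => v r i) ≠ 0) :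
    ∃ j, wedge (fun r => v r i) (fun r => v r j) ≠ 0 := by
  contrapose! hi
  have hrel : ∑ r, (![-(v 1 i : ℝ), v 0 i] : Fin 2 → ℝ) r • (fun l => (v r l : ℝ)) = 0 := by
    ext j
    have hj : (v 0 i : ℝ) * v 1 j - v 1 i * v 0 j = 0 := by exact_mod_cast hi j
    simp only [Fin.sum_univ_two, Pi.add_apply, Pi.smul_apply, Pi.zero_apply, smul_eq_mul,
      Matrix.cons_val_zero, Matrix.cons_val_one]
    linear_combination hj
  have hcoeff := Fintype.linearIndependent_iff.1 hv _ hrel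
  ext r
  fin_cases r
  · simpa using hcoeff 1
  · simpa using hcoeff 0

lemma exists_column_ne_zero {v : Fin 2 → Fin n → ℤ}
    (hv : LinearIndependent ℝ fun j i => (v j i : ℝ)) : ∃ i, (fun r => v r i) ≠ 0 := by
  obtain ⟨i, hi⟩ := Function.ne_iff.1 (hv.ne_zero 0)
  exact ⟨i, fun h => hi (by simpa using congrFun h 0)⟩

-- Cramer's rule for a nonzero minor of `v`.
lemma exists_smul_eq_sum_smul {v : Fin 2 → Fin n → ℤ}
    (hv : LinearIndependent ℝ fun j i => (v j i : ℝ)) {u : Fin n → ℤ}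
    (hu : (fun i => (u i : ℝ)) ∈ (spanParam v).range) :
    ∃ d : ℤ, d ≠ 0 ∧ ∃ q : Fin 2 → ℤ, d • u = ∑ j, q j • v j := by
  obtain ⟨i, hi⟩ := exists_column_ne_zero hv
  obtain ⟨j, hj⟩ := exists_wedge_column_ne_zero hv hi
  refine ⟨_, hj, ![u i * v 1 j - v 1 i * u j, v 0 i * u j - u i * v 0 j], funext fun l => ?_⟩
  obtain ⟨t, ht⟩ := hu
  have hcoord (l : Fin n) : (u l : ℝ) = t 0 * v 0 l + t 1 * v 1 l := by
    simpa [spanParam_apply] using (congrFun ht l).symm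
  simp only [wedge, Fin.sum_univ_two, Pi.smul_apply, Pi.add_apply, smul_eq_mul,
    Matrix.cons_val_zero, Matrix.cons_val_one]
  rify
  rw [hcoord i, hcoord j, hcoord l]
  ring

lemma exists_eq_smul_isCoprime {q : Fin 2 → ℤ} (hq : q ≠ 0) :
    ∃ g : ℤ, g ≠ 0 ∧ ∃ r : Fin 2 → ℤ, IsCoprime (r 0) (r 1) ∧ q = g • r := by
  have hgcd : 0 < Int.gcd (q 0) (q 1) := by
    rw [Nat.pos_iff_ne_zero, Ne, Int.gcd_eq_zero_iff]
    exact fun h => hq (funext (Fin.forall_fin_two.2 h))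
  obtain ⟨a, b, hab, ha, hb⟩ := Int.exists_gcd_one hgcd
  refine ⟨Int.gcd (q 0) (q 1), by exact_mod_cast hgcd.ne', ![a, b],
    Int.isCoprime_iff_gcd_eq_one.2 hab, funext (Fin.forall_fin_two.2 ⟨?_, ?_⟩)⟩
  · simpa [mul_comm] using ha
  · simpa [mul_comm] using hb

lemma exists_isCoprime_lineTorus_eq {v : Fin 2 → Fin n → ℤ}
    (hv : LinearIndependent ℝ fun j i => (v j i : ℝ)) {u : Fin n → ℤ} (hu : u ≠ 0)
    (huv : lineTorus u ⊆ spanTorus v) :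
    ∃ q : Fin 2 → ℤ, IsCoprime (q 0) (q 1) ∧ lineTorus u = lineTorus (∑ j, q j • v j) := by
  obtain ⟨d, hd, q', hq'⟩ :=
    exists_smul_eq_sum_smul hv (mem_range_spanParam_of_lineTorus_subset huv)
  have hq0 : q' ≠ 0 := by
    rintro rfl
    exact smul_ne_zero hd hu (by simpa using hq')
  obtain ⟨g, hg, q, hq, rfl⟩ := exists_eq_smul_isCoprime hq0
  refine ⟨q, hq, lineTorus_eq_of_smul_eq hd hg ?_⟩
  simpa only [Finset.smul_sum, smul_smul, Pi.smul_apply, smul_eq_mul] using hq'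

/-! ### Two segments in `Z(U)` force a finite spectrum -/

lemma mem_lineTorus_of_wedge_eq_intCast {v : Fin 2 → Fin n → ℤ} {q : Fin 2 → ℤ}
    (hq : IsCoprime (q 0) (q 1)) {a : Fin 2 → ℝ} {N : ℤ} (h : wedge (fun r => (q r : ℝ)) a = N) :
    torusProj (spanParam v a) ∈ lineTorus (∑ j, q j • v j) := by
  obtain ⟨e, f, hef⟩ := hq
  have bezout : (e * q 0 + f * q 1 : ℝ) = 1 := by exact_mod_cast hef
  simp only [wedge] at h
  have ha : a = ((e * a 0 + f * a 1) • fun r => (q r : ℝ)) +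
      fun r => ((![-(f * N), e * N] r : ℤ) : ℝ) := by
    refine funext (Fin.forall_fin_two.2 ⟨?_, ?_⟩) <;>
      simp only [Pi.add_apply, Pi.smul_apply, smul_eq_mul, Matrix.cons_val_zero,
        Matrix.cons_val_one, Int.cast_neg, Int.cast_mul]
    · linear_combination (-a 0) * bezout - f * h
    · linear_combination (-a 1) * bezout + e * h
  rw [mem_lineTorus_sum_smul_iff, ha, torusProj_spanParam_add_intCast]
  exact ⟨_, rfl⟩

lemma exists_add_mul_eq_intCast (g : ℝ) {σ : ℝ} (hσ : 1 ≤ |σ|) :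
    ∃ t ∈ Set.Icc (0 : ℝ) 1, ∃ N : ℤ, g + t * σ = N := by
  have hσ0 : σ ≠ 0 := abs_pos.1 (one_pos.trans_le hσ)
  rcases le_abs.1 hσ with h | h
  · refine ⟨(⌈g⌉ - g) / σ, ⟨div_nonneg (by linarith [Int.le_ceil g]) (by linarith), ?_⟩, ⌈g⌉, ?_⟩
    · rw [div_le_one (by linarith)]
      linarith [Int.ceil_lt_add_one g]
    · rw [div_mul_cancel₀ _ hσ0]
      ring
  · refine ⟨(g - ⌊g⌋) / -σ, ⟨div_nonneg (by linarith [Int.floor_le g]) (by linarith), ?_⟩, ⌊g⌋, ?_⟩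
    · rw [div_le_one (by linarith)]
      linarith [Int.lt_floor_add_one g]
    · rw [div_neg, neg_mul, div_mul_cancel₀ _ hσ0]
      ring

lemma torusSegment_inter_lineTorus_nonempty {v : Fin 2 → Fin n → ℤ} {q : Fin 2 → ℤ}
    (hq : IsCoprime (q 0) (q 1)) {x : Torus n} (hx : x ∈ spanTorus v) {c : Fin 2 → ℝ}
    (hc : 1 ≤ |wedge (fun r => (q r : ℝ)) c|) :
    (torusSegment x (spanParam v c) ∩ lineTorus (∑ j, q j • v j)).Nonempty := by
  rw [spanTorus_eq_range] at hx
  obtain ⟨a, rfl⟩ := hx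
  obtain ⟨t, ht, N, hN⟩ := exists_add_mul_eq_intCast (wedge (fun r => (q r : ℝ)) a) hc
  refine ⟨torusProj (spanParam v (a + t • c)), ⟨t, ht, ?_⟩,
    mem_lineTorus_of_wedge_eq_intCast hq (N := N) ?_⟩
  · rw [map_add, map_smul]
    rfl
  · rw [← hN]
    simp only [wedge, Pi.add_apply, Pi.smul_apply, smul_eq_mul]
    ring

lemma finite_setOf_intCast_mem {ι E : Type*} [Fintype ι] [PseudoMetricSpace E] {K : NNReal}
    {f : (ι → ℝ) → E} (hf : AntilipschitzWith K f) {s : Set E} (hs : Bornology.IsBounded s) :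
    {m : ι → ℤ | f (fun i => (m i : ℝ)) ∈ s}.Finite := by
  classical
  obtain ⟨R, hR⟩ := (hf.isBounded_preimage hs).subset_closedBall 0
  refine (Set.finite_Icc (fun _ : ι => -⌈R⌉) (fun _ => ⌈R⌉)).subset fun m hm => ?_
  have hm_norm : ‖fun i => (m i : ℝ)‖ ≤ R := mem_closedBall_zero_iff.1 (hR hm)
  have coord (i : ι) : |m i| ≤ ⌈R⌉ := by
    have hi : |(m i : ℝ)| ≤ ⌈R⌉ :=
      (norm_le_pi_norm (fun i => (m i : ℝ)) i).trans (hm_norm.trans (Int.le_ceil R))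
    exact_mod_cast hi
  exact ⟨fun i => (abs_le.1 (coord i)).1, fun i => (abs_le.1 (coord i)).2⟩

lemma finite_setOf_abs_wedge_lt {c c' : Fin 2 → ℝ} (h : LinearIndependent ℝ ![c, c']) (r : ℝ) :
    {q : Fin 2 → ℤ | |wedge (fun j => (q j : ℝ)) c| < r ∧
      |wedge (fun j => (q j : ℝ)) c'| < r}.Finite := by
  let M : Matrix (Fin 2) (Fin 2) ℝ := !![c 1, -c 0; c' 1, -c' 0]
  have hM : M.det ≠ 0 := by
    have hdet : Matrix.det (Matrix.of ![c, c']) ≠ 0 :=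
      ((Matrix.isUnit_iff_isUnit_det _).1 (Matrix.linearIndependent_rows_iff_isUnit.1 h)).ne_zero
    rw [Matrix.det_fin_two] at hdet
    convert hdet using 1
    simp only [M, Matrix.det_fin_two_of, Matrix.of_apply, Matrix.cons_val_zero,
      Matrix.cons_val_one]
    ring
  obtain ⟨K, -, hK⟩ := M.mulVecLin.exists_antilipschitzWith
    (LinearMap.ker_eq_bot.2 (Matrix.mulVec_injective_of_det_ne_zero hM))
  refine (finite_setOf_intCast_mem hK (isBounded_closedBall (x := 0) (r := r))).subset ?_
  rintro q ⟨hq, hq'⟩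
  have hr : 0 ≤ r := (abs_nonneg _).trans hq.le
  have hMq : M.mulVecLin (fun j => (q j : ℝ)) =
      ![wedge (fun j => (q j : ℝ)) c, wedge (fun j => (q j : ℝ)) c'] := by
    refine funext (Fin.forall_fin_two.2 ⟨?_, ?_⟩) <;>
      simp [M, wedge, Matrix.mulVec, dotProduct, mul_comm, sub_eq_add_neg]
  rw [Set.mem_ofPred_eq, hMq, mem_closedBall_zero_iff, pi_norm_le_iff_of_nonneg hr]
  exact Fin.forall_fin_two.2 ⟨hq.le, hq'.le⟩

lemma DVal_lineTorus_eq_of_torusSegment_subset_ZSet {v : Fin 2 → Fin n → ℤ} {q : Fin 2 → ℤ}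
    (hq : IsCoprime (q 0) (q 1)) (hqv : lineTorus (∑ j, q j • v j) ⊆ spanTorus v) {x : Torus n}
    {c : Fin 2 → ℝ} (hc : 1 ≤ |wedge (fun j => (q j : ℝ)) c|)
    (h : torusSegment x (spanParam v c) ⊆ ZSet (spanTorus v)) :
    DVal (lineTorus (∑ j, q j • v j)) = DVal (spanTorus v) :=
  DVal_eq_of_inter_ZSet_nonempty hqv <|
    (torusSegment_inter_lineTorus_nonempty hq (h (left_mem_torusSegment _ _)).1 hc).mono
      (Set.inter_subset_inter_left _ h)

lemma exists_spanParam_eq_of_torusSegment_subset {v : Fin k → Fin n → ℤ} {x : Torus n}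
    {w : Fin n → ℝ} (h : torusSegment x w ⊆ ZSet (spanTorus v)) : ∃ c, spanParam v c = w :=
  mem_of_torusSegment_subset (spanParam v).range
    (spanTorus_eq_image v ▸ h.trans fun _ hp => hp.1)

lemma finite_relSpec1_of_torusSegment_subset_ZSet {v : Fin 2 → Fin n → ℤ}
    (hv : LinearIndependent ℝ fun j i => (v j i : ℝ)) {x x' : Torus n} {w w' : Fin n → ℝ}
    (hw : LinearIndependent ℝ ![w, w']) (hZ : torusSegment x w ⊆ ZSet (spanTorus v))
    (hZ' : torusSegment x' w' ⊆ ZSet (spanTorus v)) : (relSpec1 (spanTorus v)).Finite := by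
  obtain ⟨c, rfl⟩ := exists_spanParam_eq_of_torusSegment_subset hZ
  obtain ⟨c', rfl⟩ := exists_spanParam_eq_of_torusSegment_subset hZ'
  have hc : LinearIndependent ℝ ![c, c'] := by
    refine LinearIndependent.of_comp (spanParam v) ?_
    convert hw using 1
    exact (FinVec.map_eq _ _).symm
  refine (((finite_setOf_abs_wedge_lt hc 1).image fun q => DVal (lineTorus (∑ j, q j • v j))).insert
    (DVal (spanTorus v))).subset ?_
  rintro _ ⟨T, hT, -, hTv, rfl⟩
  obtain ⟨u, hu, rfl⟩ := isSubtorus_one_iff.1 hT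
  obtain ⟨q, hq, huq⟩ := exists_isCoprime_lineTorus_eq hv hu hTv
  rw [huq] at hTv ⊢
  by_cases hsmall : |wedge (fun j => (q j : ℝ)) c| < 1 ∧ |wedge (fun j => (q j : ℝ)) c'| < 1
  · exact Or.inr ⟨q, hsmall, rfl⟩
  · rw [not_and_or, not_lt, not_lt] at hsmall
    left
    rcases hsmall with hlarge | hlarge
    · exact DVal_lineTorus_eq_of_torusSegment_subset_ZSet hq hTv hlarge hZ
    · exact DVal_lineTorus_eq_of_torusSegment_subset_ZSet hq hTv hlarge hZ'

/-! ### Convex pieces of `Z(U)` -/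

/-- A lift of part of `ZSet (spanTorus v)` to `ℝⁿ`: the points over `spanTorus v` within
`DVal (spanTorus v)` of the lift `1/2 + m` of the centre. The projections of these convex sets cover
`ZSet (spanTorus v)`. -/
def cell (v : Fin k → Fin n → ℤ) (m : Fin n → ℤ) : Set (Fin n → ℝ) :=
  (spanParam v).range ∩ closedBall (fun i => 1 / 2 + (m i : ℝ)) (DVal (spanTorus v))

lemma convex_cell (v : Fin k → Fin n → ℤ) (m : Fin n → ℤ) : Convex ℝ (cell v m) :=
  (Submodule.convex _).inter (convex_closedBall _ _)

lemma DVal_nonneg (S : Set (Torus n)) : 0 ≤ DVal S :=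
  (DVal_eq_infDist S).symm ▸ infDist_nonneg

lemma dist_center_torusProj_le_iff {y : Fin n → ℝ} {r : ℝ} (hr : 0 ≤ r) :
    dist (center n) (torusProj y) ≤ r ↔ ∃ m : Fin n → ℤ, dist y (fun i => 1 / 2 + m i) ≤ r := by
  rw [dist_comm, center, dist_torusProj_le_iff hr]

lemma torusProj_mem_ZSet_of_mem_cell {v : Fin k → Fin n → ℤ} {m : Fin n → ℤ} {y : Fin n → ℝ}
    (hy : y ∈ cell v m) : torusProj y ∈ ZSet (spanTorus v) :=
  mem_ZSet_iff.2 ⟨spanTorus_eq_image v ▸ ⟨y, hy.1, rfl⟩,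
    (dist_center_torusProj_le_iff (DVal_nonneg _)).2 ⟨m, hy.2⟩⟩

lemma exists_finite_ZSet_subset_iUnion_cell (v : Fin k → Fin n → ℤ) :
    ∃ F : Set (Fin n → ℤ), F.Finite ∧ ZSet (spanTorus v) ⊆ ⋃ m ∈ F, torusProj '' cell v m := by
  let B := cthickening (DVal (spanTorus v)) (spanParam v '' Set.Icc 0 1)
  have hB : Bornology.IsBounded B := (isCompact_spanParam_image_Icc v).isBounded.cthickening
  have htrans : Isometry fun y : Fin n → ℝ => (fun _ => (1 / 2 : ℝ)) + y := isometry_add_left _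
  refine ⟨_, finite_setOf_intCast_mem htrans.antilipschitz hB, fun p hp => ?_⟩
  obtain ⟨hpU, hpD⟩ := mem_ZSet_iff.1 hp
  rw [spanTorus_eq_image_Icc] at hpU
  obtain ⟨y, hy, rfl⟩ := hpU
  obtain ⟨m, hm⟩ := (dist_center_torusProj_le_iff (DVal_nonneg _)).1 hpD
  refine Set.mem_biUnion (x := m) ?_ ⟨y, ⟨Set.image_subset_range _ _ hy, hm⟩, rfl⟩
  exact mem_cthickening_of_dist_le _ y _ _ hy (by rwa [dist_comm])

lemma torusSegment_subset_ZSet_of_mem_cell {v : Fin k → Fin n → ℤ} {m : Fin n → ℤ}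
    {x y : Fin n → ℝ} (hx : x ∈ cell v m) (hy : y ∈ cell v m) :
    torusSegment (torusProj x) (y - x) ⊆ ZSet (spanTorus v) := by
  rintro _ ⟨t, ht, rfl⟩
  exact torusProj_mem_ZSet_of_mem_cell ((convex_cell v m).add_smul_sub_mem hx hy ht)

lemma dist_midpoint_lt_of_forall_ne {ι : Type*} [Fintype ι] [Nonempty ι] {x y c : ι → ℝ} {r : ℝ}
    (hx : dist x c ≤ r) (hy : dist y c ≤ r) (hxy : ∀ i, x i ≠ y i) :
    dist (midpoint ℝ x y) c < r := by
  have coord (i : ι) : dist (midpoint ℝ x y i) (c i) < r := by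
    have hxi := abs_le.1 ((dist_le_pi_dist x c i).trans hx)
    have hyi := abs_le.1 ((dist_le_pi_dist y c i).trans hy)
    have hmid : midpoint ℝ x y i = (x i + y i) / 2 := by
      simp only [pi_midpoint_apply, midpoint_eq_smul_add, invOf_eq_inv, smul_eq_mul]
      ring
    rw [Real.dist_eq, hmid, abs_lt]
    rcases lt_or_gt_of_ne (hxy i) with h | h <;> constructor <;> linarith
  exact (dist_pi_lt_iff (dist_nonneg.trans_lt (coord (Classical.arbitrary ι)))).2 coord

-- Otherwise the midpoint would be closer to the centre than `DVal (spanTorus v)`.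
lemma exists_apply_eq_of_mem_cell [NeZero n] {v : Fin k → Fin n → ℤ} {m : Fin n → ℤ}
    {x y : Fin n → ℝ} (hx : x ∈ cell v m) (hy : y ∈ cell v m) : ∃ i, x i = y i := by
  by_contra! hxy
  have hlt := dist_midpoint_lt_of_forall_ne hx.2 hy.2 hxy
  have hmid : midpoint ℝ x y ∈ cell v m := (convex_cell v m).midpoint_mem hx hy
  have hU := (torusProj_mem_ZSet_of_mem_cell hmid).1
  have hle : dist (center n) (torusProj (midpoint ℝ x y)) ≤
      dist (midpoint ℝ x y) (fun i => 1 / 2 + (m i : ℝ)) :=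
    (dist_center_torusProj_le_iff dist_nonneg).2 ⟨m, le_rfl⟩
  have hDVal : DVal (spanTorus v) ≤ dist (center n) (torusProj (midpoint ℝ x y)) :=
    (DVal_eq_infDist _).trans_le (infDist_le_dist_of_mem hU)
  exact (hDVal.trans hle).not_gt hlt

lemma exists_torusSegment_subset_ZSet [NeZero n] {v : Fin k → Fin n → ℤ} {i : Fin n}
    (hi : ((fun p : Torus n => p i) '' ZSet (spanTorus v)).Infinite) :
    ∃ x w, w i ≠ 0 ∧ (∃ l, w l = 0) ∧ torusSegment x w ⊆ ZSet (spanTorus v) := by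
  obtain ⟨m, x, hx, y, hy, hxy⟩ : ∃ m, ∃ x ∈ cell v m, ∃ y ∈ cell v m, x i ≠ y i := by
    contrapose! hi
    obtain ⟨F, hF, hZF⟩ := exists_finite_ZSet_subset_iUnion_cell v
    refine Set.Finite.subset (hF.biUnion fun m _ => Set.Subsingleton.finite ?_)
      ((Set.image_mono hZF).trans_eq (Set.image_iUnion₂ _ _))
    rintro _ ⟨_, ⟨x, hx, rfl⟩, rfl⟩ _ ⟨_, ⟨y, hy, rfl⟩, rfl⟩
    exact congrArg _ (hi m x hx y hy)
  obtain ⟨l, hl⟩ := exists_apply_eq_of_mem_cell hx hy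
  exact ⟨torusProj x, y - x, sub_ne_zero.2 hxy.symm, ⟨l, sub_eq_zero.2 hl.symm⟩,
    torusSegment_subset_ZSet_of_mem_cell hx hy⟩

/-! ### A finite spectrum makes every coordinate of `Z(U)` infinite -/

lemma spanTorus_wedge_eq (v : Fin 2 → Fin n → ℤ) {a b : Fin 2 → ℤ} (hab : wedge a b ≠ 0) :
    spanTorus ![fun l => wedge a fun r => v r l, fun l => wedge b fun r => v r l] =
      spanTorus v := by
  have hab' : wedge (fun r => (a r : ℝ)) (fun r => (b r : ℝ)) ≠ 0 := by
    simp only [wedge] at hab ⊢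
    exact_mod_cast hab
  rw [spanTorus_eq_image, spanTorus_eq_image]
  congr 2
  apply le_antisymm
  · rintro _ ⟨t, rfl⟩
    refine ⟨![-(t 0 * a 1 + t 1 * b 1), t 0 * a 0 + t 1 * b 0], funext fun l => ?_⟩
    simp only [spanParam_apply, Fin.sum_univ_two, Matrix.cons_val_zero, Matrix.cons_val_one, wedge]
    push_cast
    ring
  · rintro _ ⟨t, rfl⟩
    rw [← Submodule.smul_mem_iff _ hab']
    refine ⟨![t 0 * b 0 + t 1 * b 1, -(t 0 * a 0 + t 1 * a 1)], funext fun l => ?_⟩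
    simp only [Pi.smul_apply, smul_eq_mul, spanParam_apply, Fin.sum_univ_two,
      Matrix.cons_val_zero, Matrix.cons_val_one, wedge]
    push_cast
    ring

lemma exists_adapted_basis {v : Fin 2 → Fin n → ℤ}
    (hv : LinearIndependent ℝ fun j i => (v j i : ℝ)) {i : Fin n} (hi : (fun r => v r i) ≠ 0) :
    ∃ p q : Fin n → ℤ, ∃ j, spanTorus ![p, q] = spanTorus v ∧
      p i = 0 ∧ q j = 0 ∧ q i ≠ 0 ∧ p j = -q i := by
  obtain ⟨j, hj⟩ := exists_wedge_column_ne_zero hv hi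
  have wedge_self (a : Fin 2 → ℤ) : wedge a a = 0 := sub_eq_zero.2 (mul_comm _ _)
  have wedge_swap (a b : Fin 2 → ℤ) : wedge a b = -wedge b a := by
    simp only [wedge]
    ring
  exact ⟨_, _, j, spanTorus_wedge_eq v hj, wedge_self _, wedge_self _,
    fun h => hj ((wedge_swap _ _).trans (neg_eq_zero.2 h)), wedge_swap _ _⟩

lemma intCast_add_nsmul_apply (p q : Fin n → ℤ) (s : ℕ) (i : Fin n) :
    (((q + s • p) i : ℤ) : ℝ) = q i + s * p i := by
  simp

lemma lineTorus_add_smul_subset (p q : Fin n → ℤ) (s : ℕ) :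
    lineTorus (q + s • p) ⊆ spanTorus ![p, q] := by
  intro x hx
  obtain ⟨t, rfl⟩ := mem_lineTorus_iff.1 hx
  rw [spanTorus_eq_range]
  refine ⟨![t * s, t], congrArg torusProj (funext fun l => ?_)⟩
  simp only [spanParam_apply, Fin.sum_univ_two, Matrix.cons_val_zero, Matrix.cons_val_one,
    Pi.smul_apply, smul_eq_mul, intCast_add_nsmul_apply]
  ring

lemma exists_mem_lineTorus_dist_le {p q : Fin n → ℤ} {x : Torus n} (hx : x ∈ spanTorus ![p, q])
    {s : ℕ} (hs : 0 < s) :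
    ∃ y ∈ lineTorus (q + s • p), dist x y ≤ ‖fun i => (q i : ℝ)‖ / s := by
  rw [spanTorus_eq_range] at hx
  obtain ⟨a, rfl⟩ := hx
  have hs' : (0 : ℝ) < s := Nat.cast_pos.2 hs
  let m : ℤ := ⌊a 1 * s - a 0⌋
  let t : ℝ := (a 0 + m) / s
  have hts : t * s = a 0 + m := div_mul_cancel₀ _ hs'.ne'
  have ht : |a 1 - t| ≤ 1 / s := by
    rw [le_div_iff₀ hs', ← abs_of_pos hs', ← abs_mul, sub_mul, hts, abs_le]
    constructor <;> linarith [Int.floor_le (a 1 * s - a 0), Int.lt_floor_add_one (a 1 * s - a 0)]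
  have hline : torusProj (spanParam ![p, q] ![a 0, t]) ∈ lineTorus (q + s • p) := by
    refine mem_lineTorus_iff.2 ⟨t, (torusProj_eq_iff.2 ⟨m • p, funext fun i => ?_⟩).symm⟩
    change t * (((q + s • p) i : ℤ) : ℝ) = spanParam ![p, q] ![a 0, t] i + ((m * p i : ℤ) : ℝ)
    simp only [intCast_add_nsmul_apply, spanParam_apply, Fin.sum_univ_two, Matrix.cons_val_zero,
      Matrix.cons_val_one, Int.cast_mul]
    linear_combination (p i : ℝ) * hts
  have hdiff : spanParam ![p, q] a - spanParam ![p, q] ![a 0, t] =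
      (a 1 - t) • fun i => (q i : ℝ) := by
    ext i
    simp only [Pi.sub_apply, spanParam_apply, Fin.sum_univ_two, Matrix.cons_val_zero,
      Matrix.cons_val_one, Pi.smul_apply, smul_eq_mul]
    ring
  refine ⟨_, hline, ?_⟩
  calc dist (torusProj (spanParam ![p, q] a)) (torusProj (spanParam ![p, q] ![a 0, t]))
      ≤ dist (spanParam ![p, q] a) (spanParam ![p, q] ![a 0, t]) := dist_torusProj_le _ _
    _ = |a 1 - t| * ‖fun i => (q i : ℝ)‖ := by
      rw [dist_eq_norm, hdiff, norm_smul, Real.norm_eq_abs]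
    _ ≤ 1 / s * ‖fun i => (q i : ℝ)‖ := by gcongr
    _ = ‖fun i => (q i : ℝ)‖ / s := by ring

lemma tendsto_DVal_lineTorus_add_smul (p q : Fin n → ℤ) :
    Tendsto (fun s : ℕ => DVal (lineTorus (q + s • p))) atTop (𝓝 (DVal (spanTorus ![p, q]))) := by
  obtain ⟨x, hx, hxD⟩ := exists_dist_center_eq_DVal ![p, q]
  have hupper : Tendsto (fun s : ℕ => DVal (spanTorus ![p, q]) + ‖fun i => (q i : ℝ)‖ / s) atTop
      (𝓝 (DVal (spanTorus ![p, q]))) := by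
    simpa using (tendsto_const_div_atTop_nhds_zero_nat ‖fun i => (q i : ℝ)‖).const_add
      (DVal (spanTorus ![p, q]))
  refine tendsto_of_tendsto_of_tendsto_of_le_of_le' tendsto_const_nhds hupper
    (Eventually.of_forall fun s => ?_) ((eventually_gt_atTop 0).mono fun s hs => ?_)
  · simpa only [DVal_eq_infDist] using
      infDist_le_infDist_of_subset (lineTorus_add_smul_subset p q s) (lineTorus_nonempty _)
  · obtain ⟨y, hy, hxy⟩ := exists_mem_lineTorus_dist_le hx hs
    calc DVal (lineTorus (q + s • p)) ≤ dist (center n) y := by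
          rw [DVal_eq_infDist]
          exact infDist_le_dist_of_mem hy
      _ ≤ dist (center n) x + dist x y := dist_triangle _ _ _
      _ ≤ DVal (spanTorus ![p, q]) + ‖fun i => (q i : ℝ)‖ / s := by
        rw [hxD]
        gcongr

lemma eventually_eq_of_tendsto_of_finite {α X : Type*} [TopologicalSpace X] [T1Space X]
    {l : Filter α} {f : α → X} {a : X} {S : Set X} (hf : Tendsto f l (𝓝 a)) (hS : S.Finite)
    (hfS : ∀ᶠ s in l, f s ∈ S) : ∀ᶠ s in l, f s = a := by
  have hnhds : (S \ {a})ᶜ ∈ 𝓝 a :=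
    (hS.subset Set.sdiff_subset).isClosed.isOpen_compl.mem_nhds (by simp)
  filter_upwards [hf hnhds, hfS] with s hs hsS
  by_contra hne
  exact hs ⟨hsS, hne⟩

lemma frequently_norm_nsmul_lt {G : Type*} [NormedAddCommGroup G] [CompactSpace G] {A : Set G}
    (hA : A.Finite) {ε : ℝ} (hε : 0 < ε) : ∃ᶠ s : ℕ in atTop, ∀ a ∈ A, ‖s • a‖ < ε := by
  have := hA.fintype
  have hcluster := mapClusterPt_zero_atTop_nsmul (fun a : A => (a : G))
  refine (hcluster.frequently (ball_mem_nhds 0 hε)).mono fun s (hs : _ ∈ ball 0 ε) a ha => ?_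
  rw [mem_ball_zero_iff, pi_norm_lt_iff hε] at hs
  exact hs ⟨a, ha⟩

lemma eventually_DVal_lineTorus_add_smul_eq {p q : Fin n → ℤ} {i : Fin n} (hp : p i = 0)
    (hq : q i ≠ 0) (hproper : DVal (spanTorus ![p, q]) < 1 / 2)
    (hfin : (relSpec1 (spanTorus ![p, q])).Finite) :
    ∀ᶠ s : ℕ in atTop, DVal (lineTorus (q + s • p)) = DVal (spanTorus ![p, q]) := by
  have hlim := tendsto_DVal_lineTorus_add_smul p q
  refine eventually_eq_of_tendsto_of_finite hlim hfin ?_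
  filter_upwards [hlim.eventually_lt_const hproper] with s hs
  have hne : q + s • p ≠ 0 := fun h => hq (by simpa [hp] using congrFun h i)
  exact ⟨_, isSubtorus_one_iff.2 ⟨_, hne, rfl⟩,
    (isProperSub_iff_DVal_lt (lineTorus_nonempty _)).2 hs, lineTorus_add_smul_subset p q s, rfl⟩

lemma apply_eq_neg_nsmul_of_mem_lineTorus {p q : Fin n → ℤ} {i j : Fin n} (hpi : p i = 0)
    (hqj : q j = 0) (hpj : p j = -q i) {s : ℕ} {z : Torus n} (hz : z ∈ lineTorus (q + s • p)) :
    z j = -(s • z i) := by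
  obtain ⟨t, rfl⟩ := mem_lineTorus_iff.1 hz
  simp only [torusProj, ← AddCircle.coe_nsmul, ← AddCircle.coe_neg]
  congr 1
  simp only [Pi.smul_apply, smul_eq_mul, intCast_add_nsmul_apply, hpi, hqj, hpj]
  push_cast
  ring

lemma infinite_image_apply_ZSet {v : Fin 2 → Fin n → ℤ}
    (hv : LinearIndependent ℝ fun j i => (v j i : ℝ)) (hproper : IsProperSub (spanTorus v))
    (hfin : (relSpec1 (spanTorus v)).Finite) (i : Fin n) :
    ((fun p : Torus n => p i) '' ZSet (spanTorus v)).Infinite := by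
  intro hcoord
  obtain ⟨p, q, j, hpq, hpi, hqj, hqi, hpj⟩ :=
    exists_adapted_basis hv (column_ne_zero_of_isProperSub hproper i)
  have hD : DVal (spanTorus v) < 1 / 2 :=
    (isProperSub_iff_DVal_lt ⟨0, zero_mem_spanTorus v⟩).1 hproper
  rw [← hpq] at hfin hcoord hD
  obtain ⟨s, hsmall, hs⟩ := ((frequently_norm_nsmul_lt hcoord (sub_pos.2 hD)).and_eventually
    (eventually_DVal_lineTorus_add_smul_eq hpi hqi hD hfin)).exists
  obtain ⟨z, hz, hzD⟩ := exists_dist_center_eq_DVal fun _ : Fin 1 => q + s • p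
  have hzD' : dist (center n) z = DVal (spanTorus ![p, q]) := hzD.trans hs
  have hzZ : z ∈ ZSet (spanTorus ![p, q]) :=
    mem_ZSet_iff.2 ⟨lineTorus_add_smul_subset p q s hz, hzD'.le⟩
  have hzj_small : ‖z j‖ < 1 / 2 - DVal (spanTorus ![p, q]) := by
    rw [apply_eq_neg_nsmul_of_mem_lineTorus hpi hqj hpj hz, norm_neg]
    exact hsmall _ ⟨z, hzZ, rfl⟩
  have hzj_close : 1 / 2 - ‖z j‖ ≤ DVal (spanTorus ![p, q]) := by
    rw [← dist_half_eq, ← hzD', dist_comm]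
    exact dist_le_pi_dist (center n) z j
  linarith

theorem stmt18_general (n : ℕ) (U : Set (Torus n)) (hU : IsSubtorus 2 U)
    (hUproper : IsProperSub U) :
    (relSpec1 U).Finite ↔
      ∃ (x x' : Torus n) (w w' : Fin n → ℝ),
        w ≠ 0 ∧ w' ≠ 0 ∧ (∀ c : ℝ, w' ≠ c • w) ∧
        {p : Torus n | ∃ t ∈ Set.Icc (0 : ℝ) 1, p = x + torusProj fun i => t * w i} ⊆ ZSet U ∧
        {p : Torus n | ∃ t ∈ Set.Icc (0 : ℝ) 1, p = x' + torusProj fun i => t * w' i} ⊆ ZSet U := by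
  obtain ⟨v, hv, rfl⟩ := hU
  constructor
  · intro hfin
    obtain ⟨i, -⟩ := exists_column_ne_zero hv
    have : NeZero n := ⟨i.pos.ne'⟩
    obtain ⟨x, w, hwi, ⟨l, hwl⟩, hZ⟩ :=
      exists_torusSegment_subset_ZSet (infinite_image_apply_ZSet hv hUproper hfin i)
    obtain ⟨x', w', hwl', -, hZ'⟩ :=
      exists_torusSegment_subset_ZSet (infinite_image_apply_ZSet hv hUproper hfin l)
    exact ⟨x, x', w, w', fun h0 => hwi (congrFun h0 i), fun h0 => hwl' (congrFun h0 l),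
      fun c hc => hwl' (by simp [hc, hwl]), hZ, hZ'⟩
  · rintro ⟨x, x', w, w', hw, -, hww', hZ, hZ'⟩
    exact finite_relSpec1_of_torusSegment_subset_ZSet hv
      ((LinearIndependent.pair_iff' hw).2 fun c => (hww' c).symm) hZ hZ'

/-- **Proposition (finiteness criterion).** `𝒮₁(U)` is finite iff `Z(U)` contains two
non-parallel nondegenerate line segments. -/
theorem stmt18 (n : ℕ) (hn : 3 ≤ n) (U : Set (Torus n))
    (hU : IsSubtorus 2 U) (hUproper : IsProperSub U) :
    (relSpec1 U).Finite ↔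
      ∃ (x x' : Torus n) (w w' : Fin n → ℝ),
        w ≠ 0 ∧ w' ≠ 0 ∧ (∀ c : ℝ, w' ≠ c • w) ∧
        {p : Torus n | ∃ t ∈ Set.Icc (0 : ℝ) 1, p = x + torusProj fun i => t * w i} ⊆ ZSet U ∧
        {p : Torus n | ∃ t ∈ Set.Icc (0 : ℝ) 1, p = x' + torusProj fun i => t * w' i} ⊆ ZSet U := by
  exact stmt18_general n U hU hUproper
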